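/- arXiv:2503.11522 — 3 statements merged into one kernel-verified Lean document; each statement's English description precedes it below -/
import Mathlib

section
/- Let τ₀ ∈ ℝ, θ ∈ (0,1) and F∞ ∈ ℝ. Let F : [τ₀, ∞) → ℝ be differentiable with F(τ) > F∞ for all τ ≥ τ₀, and let g : [τ₀, ∞) → ℝ be continuous and nonnegative. Assume that for all τ ≥ τ₀ one has F′(τ) = −g(τ)² and the Łojasiewicz-type inequality (F(τ) − F∞)^{1−θ} ≤ g(τ). Then g is Lebesgue integrable on [τ₀, ∞) and ∫_{τ₀}^{∞} g(τ) dτ ≤ (1/θ)·(F(τ₀) − F∞)^{θ}. -/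
/-!
Along the flow, the function `G = -(1/θ) (F - F∞)^θ` has derivative `(F - F∞)^(θ-1) g²`, and the
Łojasiewicz inequality says exactly that this is at least `g`. Hence `∫ g` over `[τ₀, b]` is at most
`G b - G τ₀`, which is at most `(1/θ) (F τ₀ - F∞)^θ` because `G b ≤ 0`. This bound is uniform in
`b`, and `g ≥ 0`, so `g` is integrable on the half-line and the bound passes to the limit.
-/

open Set MeasureTheory

/-- The pointwise inequality `g ≤ G'`, with `x = F - F∞` and `y = g`. -/
lemma le_rpow_mul_sq_of_rpow_le {x y θ : ℝ} (hx : 0 < x) (hy : 0 ≤ y) (h : x ^ (1 - θ) ≤ y) :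
    y ≤ x ^ (θ - 1) * y ^ 2 := by
  have hone : x ^ (θ - 1) * x ^ (1 - θ) = 1 := by
    rw [← Real.rpow_add hx]; simp
  calc y = x ^ (θ - 1) * x ^ (1 - θ) * y := by rw [hone, one_mul]
    _ ≤ x ^ (θ - 1) * y * y := by gcongr
    _ = x ^ (θ - 1) * y ^ 2 := by ring

/-- Abstract Łojasiewicz argument (Lemma 2.2): if `F` is a differentiable function on
`[τ₀, ∞)` with `F > F∞`, `F′ = -g²` for a continuous nonnegative `g`, and the
Łojasiewicz inequality `(F - F∞)^(1-θ) ≤ g` holds, then `g` is integrable on `[τ₀, ∞)`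
with `∫ g ≤ (1/θ)·(F(τ₀) - F∞)^θ`. -/
theorem stmt_0 (τ₀ θ Finf : ℝ) (hθ : θ ∈ Set.Ioo (0 : ℝ) 1)
    (F g : ℝ → ℝ)
    (hF' : ∀ τ ∈ Ici τ₀, HasDerivAt F (-(g τ) ^ 2) τ)
    (hFgt : ∀ τ ∈ Ici τ₀, Finf < F τ)
    (hg_cont : ContinuousOn g (Ici τ₀))
    (hg_nonneg : ∀ τ ∈ Ici τ₀, 0 ≤ g τ)
    (hLoj : ∀ τ ∈ Ici τ₀, (F τ - Finf) ^ (1 - θ) ≤ g τ) :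
    IntegrableOn g (Ici τ₀) ∧
      ∫ τ in Ici τ₀, g τ ≤ (1 / θ) * (F τ₀ - Finf) ^ θ := by
  have hθ0 : 0 < θ := hθ.1
  have hderiv : ∀ τ ∈ Ici τ₀, HasDerivAt (fun t => -((1 / θ) * (F t - Finf) ^ θ))
      ((F τ - Finf) ^ (θ - 1) * g τ ^ 2) τ := by
    intro τ hτ
    have h := ((((hF' τ hτ).sub_const Finf).rpow_const (p := θ)
      (Or.inl (sub_pos.2 (hFgt τ hτ)).ne')).const_mul (1 / θ)).fun_neg
    refine h.congr_deriv ?_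
    field_simp
  have hint : ∀ b, IntegrableOn g (Icc τ₀ b) := fun b =>
    (hg_cont.mono Icc_subset_Ici_self).integrableOn_Icc
  have hbound : ∀ b, τ₀ ≤ b → ∫ t in τ₀..b, g t ≤ (1 / θ) * (F τ₀ - Finf) ^ θ := by
    intro b hb
    have h := intervalIntegral.integral_le_sub_of_hasDeriv_right_of_le hb
      (fun t ht => (hderiv t ht.1).continuousAt.continuousWithinAt)
      (fun t ht => (hderiv t ht.1.le).hasDerivWithinAt) (hint b)
      (fun t ht => le_rpow_mul_sq_of_rpow_le (sub_pos.2 (hFgt t ht.1.le))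
        (hg_nonneg t ht.1.le) (hLoj t ht.1.le))
    have hpos : 0 ≤ (1 / θ) * (F b - Finf) ^ θ :=
      mul_nonneg (by positivity) (Real.rpow_nonneg (sub_pos.2 (hFgt b hb)).le _)
    linarith
  have hIoi : IntegrableOn g (Ioi τ₀) := by
    refine integrableOn_Ioi_of_intervalIntegral_norm_bounded ((1 / θ) * (F τ₀ - Finf) ^ θ) τ₀
      (fun b => (hint b).mono_set Ioc_subset_Icc_self) Filter.tendsto_id ?_
    filter_upwards [Filter.eventually_ge_atTop τ₀] with b hb
    refine le_of_eq_of_le (intervalIntegral.integral_congr fun t ht => ?_) (hbound b hb)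
    rw [uIcc_of_le (by exact hb)] at ht
    exact Real.norm_of_nonneg (hg_nonneg t ht.1)
  refine ⟨(integrableOn_Ici_iff_integrableOn_Ioi).2 hIoi, ?_⟩
  rw [integral_Ici_eq_integral_Ioi]
  refine le_of_tendsto (intervalIntegral_tendsto_integral_Ioi τ₀ hIoi Filter.tendsto_id) ?_
  filter_upwards [Filter.eventually_ge_atTop τ₀] with b hb using hbound b hb
end

section
/- Let C ≥ 0 and let f : [0, ∞) → ℝ be continuous, nonnegative, and satisfy f(τ₂) ≤ e^{C(τ₂ − τ₁)} f(τ₁) for all 0 ≤ τ₁ ≤ τ₂. If ∫₀^∞ √(f(τ)) dτ < ∞, then the series ∑_{i=0}^{∞} sup_{τ ∈ [i, i+2]} √(f(τ)) converges. -/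
/-!
The growth bound says that `√f` on `[j+1, j+3]` is controlled by each of its earlier values on
`[j, j+1]`, up to the factor `K = √(exp (3C))`. Averaging over `s ∈ [j, j+1]` gives
`sup_{[j+1, j+3]} √f ≤ K ∫_j^{j+1} √f`, and the integrals over the unit intervals have
partial sums bounded by `∫_0^∞ √f`. The term `i = 0` does not affect convergence.
-/

open Set MeasureTheory

/-- From integrability of `√f` on `[0,∞)` and the controlled growth
`f(τ₂) ≤ e^{C(τ₂-τ₁)} f(τ₁)`, the series of local suprema
`∑ᵢ sup_{[i,i+2]} √f` converges. -/
theorem stmt_2 (C : ℝ) (hC : 0 ≤ C) (f : ℝ → ℝ)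
    (hf_cont : ContinuousOn f (Ici (0 : ℝ)))
    (hf_nonneg : ∀ τ ∈ Ici (0 : ℝ), 0 ≤ f τ)
    (hgrowth : ∀ τ₁ τ₂ : ℝ, 0 ≤ τ₁ → τ₁ ≤ τ₂ →
      f τ₂ ≤ Real.exp (C * (τ₂ - τ₁)) * f τ₁)
    (hint : IntegrableOn (fun τ => Real.sqrt (f τ)) (Ici (0 : ℝ))) :
    Summable (fun i : ℕ =>
      sSup ((fun τ => Real.sqrt (f τ)) '' Icc (i : ℝ) (i + 2))) := by
  have hii : ∀ a b : ℝ, 0 ≤ a → a ≤ b →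
      IntervalIntegrable (fun τ => Real.sqrt (f τ)) volume a b := fun a b ha hab =>
    (intervalIntegrable_iff_integrableOn_Ioc_of_le hab).2
      (hint.mono_set fun x hx => ha.trans hx.1.le)
  have hsum : Summable (fun j : ℕ => ∫ s in (j : ℝ)..((j + 1 : ℕ) : ℝ), Real.sqrt (f s)) := by
    refine summable_of_sum_range_le (c := ∫ s in Ici (0 : ℝ), Real.sqrt (f s)) ?_ ?_
    · intro j
      exact intervalIntegral.integral_nonneg (by push_cast; linarith)
        fun s _ => Real.sqrt_nonneg _
    · intro n
      rw [intervalIntegral.sum_integral_adjacent_intervals (a := fun j : ℕ => (j : ℝ))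
        fun j _ => hii _ _ (Nat.cast_nonneg j) (by push_cast; linarith)]
      rw [intervalIntegral.integral_of_le (by simp)]
      refine setIntegral_mono_set hint (ae_of_all _ fun s => Real.sqrt_nonneg _) ?_
      refine HasSubset.Subset.eventuallyLE fun x hx => ?_
      have h := hx.1
      simp only [Nat.cast_zero] at h
      exact h.le
  rw [← summable_nat_add_iff 1]
  refine Summable.of_nonneg_of_le (fun j => ?_) (fun j => ?_)
    (hsum.mul_left (Real.sqrt (Real.exp (3 * C))))
  · refine Real.sSup_nonneg ?_
    rintro _ ⟨τ, -, rfl⟩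
    exact Real.sqrt_nonneg _
  · have hj : (0 : ℝ) ≤ j := Nat.cast_nonneg j
    have hjj : (j : ℝ) ≤ ((j + 1 : ℕ) : ℝ) := by push_cast; linarith
    refine csSup_le ((nonempty_Icc.2 (by linarith)).image _) ?_
    rintro _ ⟨τ, hτ, rfl⟩
    obtain ⟨h1, h2⟩ := hτ
    push_cast at h1 h2
    have hpt : ∀ s ∈ Icc (j : ℝ) ((j + 1 : ℕ) : ℝ),
        Real.sqrt (f τ) ≤ Real.sqrt (Real.exp (3 * C)) * Real.sqrt (f s) := by
      rintro s ⟨h3, h4⟩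
      push_cast at h4
      rw [← Real.sqrt_mul (Real.exp_pos _).le]
      refine Real.sqrt_le_sqrt ((hgrowth s τ (by linarith) (by linarith)).trans ?_)
      refine mul_le_mul_of_nonneg_right (Real.exp_le_exp.2 ?_) (hf_nonneg s (hj.trans h3))
      nlinarith
    -- The interval has length one, so the constant `√(f τ)` equals its own integral over it.
    have h := intervalIntegral.integral_mono_on hjj intervalIntegrable_const
      ((hii _ _ hj hjj).const_mul _) hpt
    rw [intervalIntegral.integral_const, intervalIntegral.integral_const_mul] at h
    simpa using h
end

section
/- Let Λ ∈ ℝ, A ≥ 0, c ≥ 0, and let C, D : [0, ∞) → ℝ be continuous and nonnegative with C, C², and D all Lebesgue integrable on [0, ∞). Let I : [0, ∞) → ℝ and U : [0, ∞) → ℝ be differentiable and suppose for all τ ≥ 0: (i) I(τ) > 0; (ii) U(τ) ≤ Λ; (iii) I′(τ)/I(τ) ≥ (1 + C(τ)/2)·U(τ) − (3 + A)·(C(τ) + D(τ)); (iv) U′(τ) ≥ −c (Λ − U(τ)) (D(τ) + C(τ)²). Then there exists λ > 0 such that I(τ) ≥ I(0) · e^{−λ(τ + 1)} for all τ ≥ 0.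 In particular, it is not the case that e^{kτ} I(τ) → 0 as τ → ∞ for every k ∈ ℕ. -/
open Set MeasureTheory Filter

/-!
The inequality `U' ≥ c (U - Λ) (D + C²)` says that `(U - Λ) exp (-c G)` is nondecreasing, where
`G` is the primitive of `D + C²` vanishing at `0`. Since `G` is bounded by integrability and
`U 0 ≤ Λ`, the frequency `U` is bounded below by some `-K`. The logarithmic derivative of `I` is then
at least `-K (1 + C/2) - (3 + A) (C + D)`, so adding to `log I` the primitive of the opposite of
this bound gives a nondecreasing function; the primitives of `C` and `D` being bounded,
`log I` is at least `log (I 0) - K τ - B`. An exponential lower bound rules out decay faster than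
every exponential.
-/

/-- A continuous, nonnegative, integrable function on the half-line has a bounded primitive. The
primitive is taken of the extension `t ↦ f (max 0 t)`, so that it has a two-sided derivative at `0`. -/
lemma exists_bounded_primitive (f : ℝ → ℝ) (hc : ContinuousOn f (Ici (0 : ℝ)))
    (h0 : ∀ t ∈ Ici (0 : ℝ), 0 ≤ f t) (hi : IntegrableOn f (Ici (0 : ℝ))) :
    ∃ (F : ℝ → ℝ) (M : ℝ), F 0 = 0 ∧ 0 ≤ M ∧ (∀ t ∈ Ici (0 : ℝ), HasDerivAt F (f t) t) ∧
      ∀ t ∈ Ici (0 : ℝ), F t ≤ M := by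
  have hg : Continuous fun t : ℝ => f (max 0 t) :=
    hc.comp_continuous (by fun_prop) fun t => le_max_left 0 t
  refine ⟨fun t => ∫ s in (0 : ℝ)..t, f (max 0 s), ∫ s in Ici (0 : ℝ), f s, by simp,
    setIntegral_nonneg measurableSet_Ici h0, ?_, ?_⟩
  · intro t ht
    have h := hg.integral_hasStrictDerivAt 0 t
    simpa [max_eq_right (mem_Ici.1 ht)] using h.hasDerivAt
  · intro t ht
    have h1 : ∫ s in (0 : ℝ)..t, f (max 0 s) = ∫ s in Ioc (0 : ℝ) t, f s := by
      rw [intervalIntegral.integral_of_le ht]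
      refine setIntegral_congr_fun measurableSet_Ioc fun s hs => ?_
      simp [max_eq_right hs.1.le]
    simp only [h1]
    refine setIntegral_mono_set hi ?_ ?_
    · exact (ae_restrict_mem measurableSet_Ici).mono h0
    · exact (Ioc_subset_Ioi_self.trans Ioi_subset_Ici_self).eventuallyLE

lemma le_of_hasDerivAt_nonneg (f f' : ℝ → ℝ) (hf : ∀ t ∈ Ici (0 : ℝ), HasDerivAt f (f' t) t)
    (h0 : ∀ t ∈ Ici (0 : ℝ), 0 ≤ f' t) (t : ℝ) (ht : t ∈ Ici (0 : ℝ)) : f 0 ≤ f t := by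
  have hm : MonotoneOn f (Ici (0 : ℝ)) := by
    refine monotoneOn_of_deriv_nonneg (convex_Ici 0)
      (fun x hx => (hf x hx).continuousAt.continuousWithinAt)
      (fun x hx => (hf x (interior_subset hx)).differentiableAt.differentiableWithinAt)
      fun x hx => ?_
    rw [(hf x (interior_subset hx)).deriv]
    exact h0 x (interior_subset hx)
  exact hm self_mem_Ici ht ht

/-- Abstract analytic skeleton of Theorem 2.1: with `I > 0`, frequency `U ≤ Λ`,
logarithmic derivative bound `I′/I ≥ (1 + C/2)U - (3+A)(C+D)` and frequency derivative
bound `U′ ≥ -c(Λ-U)(D+C²)`, where `C`, `C²`, `D` are integrable nonnegative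
coefficients, the energy satisfies `I(τ) ≥ I(0)·e^{-λ(τ+1)}` for some `λ > 0`;
in particular `I` cannot decay faster than every exponential. -/
theorem stmt_7 (Λ A c : ℝ) (hA : 0 ≤ A) (hc : 0 ≤ c)
    (Cf Df I U I' U' : ℝ → ℝ)
    (hCf_cont : ContinuousOn Cf (Ici (0 : ℝ)))
    (hDf_cont : ContinuousOn Df (Ici (0 : ℝ)))
    (hCf_nonneg : ∀ τ ∈ Ici (0 : ℝ), 0 ≤ Cf τ)
    (hDf_nonneg : ∀ τ ∈ Ici (0 : ℝ), 0 ≤ Df τ)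
    (hCf_int : IntegrableOn Cf (Ici (0 : ℝ)))
    (hCf2_int : IntegrableOn (fun τ => (Cf τ) ^ 2) (Ici (0 : ℝ)))
    (hDf_int : IntegrableOn Df (Ici (0 : ℝ)))
    (hI_deriv : ∀ τ ∈ Ici (0 : ℝ), HasDerivAt I (I' τ) τ)
    (hU_deriv : ∀ τ ∈ Ici (0 : ℝ), HasDerivAt U (U' τ) τ)
    (hI_pos : ∀ τ ∈ Ici (0 : ℝ), 0 < I τ)
    (hU_le : ∀ τ ∈ Ici (0 : ℝ), U τ ≤ Λ)
    (hlog : ∀ τ ∈ Ici (0 : ℝ),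
      (1 + Cf τ / 2) * U τ - (3 + A) * (Cf τ + Df τ) ≤ I' τ / I τ)
    (hU' : ∀ τ ∈ Ici (0 : ℝ),
      -c * (Λ - U τ) * (Df τ + (Cf τ) ^ 2) ≤ U' τ) :
    (∃ lam : ℝ, 0 < lam ∧
      ∀ τ ∈ Ici (0 : ℝ), I 0 * Real.exp (-lam * (τ + 1)) ≤ I τ) ∧
      ¬ (∀ k : ℕ, Tendsto (fun τ => Real.exp (k * τ) * I τ) atTop (nhds 0)) := by
  obtain ⟨G, N, hG0, hN, hG, hGN⟩ := exists_bounded_primitive (fun t => Df t + Cf t ^ 2)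
    (hDf_cont.add (hCf_cont.pow 2)) (fun t ht => add_nonneg (hDf_nonneg t ht) (sq_nonneg _))
    (hDf_int.add hCf2_int)
  obtain ⟨F, M, hF0, hM, hF, hFM⟩ := exists_bounded_primitive Cf hCf_cont hCf_nonneg hCf_int
  obtain ⟨E, P, hE0, hP, hE, hEP⟩ := exists_bounded_primitive Df hDf_cont hDf_nonneg hDf_int
  obtain ⟨K, hK, hUK⟩ : ∃ K : ℝ, 0 ≤ K ∧ ∀ t ∈ Ici (0 : ℝ), -K ≤ U t := by
    have hU0 : 0 ≤ Λ - U 0 := sub_nonneg.2 (hU_le 0 self_mem_Ici)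
    refine ⟨|Λ| + (Λ - U 0) * Real.exp (c * N), by positivity, fun t ht => ?_⟩
    have h := le_of_hasDerivAt_nonneg (fun t => (U t - Λ) * Real.exp (-c * G t)) _
      (fun t ht => ((hU_deriv t ht).sub_const Λ).mul (((hG t ht).const_mul (-c)).exp))
      (fun t ht => by
        have := mul_nonneg (sub_nonneg.2 (hU' t ht)) (Real.exp_pos (-c * G t)).le
        linarith) t ht
    simp only [hG0, mul_zero, Real.exp_zero, mul_one] at h
    have h1 : (U 0 - Λ) * Real.exp (c * G t) ≤ U t - Λ := by
      have := mul_le_mul_of_nonneg_right h (Real.exp_pos (c * G t)).le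
      rwa [mul_assoc, ← Real.exp_add, show -c * G t + c * G t = 0 by ring, Real.exp_zero,
        mul_one] at this
    have h2 : Real.exp (c * G t) ≤ Real.exp (c * N) :=
      Real.exp_le_exp.2 (mul_le_mul_of_nonneg_left (hGN t ht) hc)
    have h3 := mul_le_mul_of_nonneg_left h2 hU0
    linarith [neg_abs_le Λ]
  have hmain : ∃ lam : ℝ, 0 < lam ∧
      ∀ τ ∈ Ici (0 : ℝ), I 0 * Real.exp (-lam * (τ + 1)) ≤ I τ := by
    refine ⟨K + (K / 2 * M + (3 + A) * (M + P)) + 1, by positivity, fun t ht => ?_⟩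
    have h := le_of_hasDerivAt_nonneg
      (fun t => Real.log (I t) + (K * t + K / 2 * F t + (3 + A) * (F t + E t))) _
      (fun t ht => ((hI_deriv t ht).log (hI_pos t ht).ne').add
        ((((hasDerivAt_id t).const_mul K).add ((hF t ht).const_mul (K / 2))).add
          (((hF t ht).add (hE t ht)).const_mul (3 + A))))
      (fun t ht => by
        have h1 := hlog t ht
        have h2 : 0 ≤ (1 + Cf t / 2) * (U t + K) :=
          mul_nonneg (by linarith [hCf_nonneg t ht]) (by linarith [hUK t ht])
        linarith) t ht
    simp only [hF0, hE0, mul_zero, add_zero] at h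
    have h1 := mul_le_mul_of_nonneg_left (hFM t ht) (by positivity : 0 ≤ K / 2)
    have h2 := mul_le_mul_of_nonneg_left (add_le_add (hFM t ht) (hEP t ht))
      (by positivity : 0 ≤ 3 + A)
    have ht0 : 0 ≤ t := ht
    have hB : 0 ≤ (K / 2 * M + (3 + A) * (M + P)) * t := by positivity
    rw [← Real.exp_log (hI_pos t ht)]
    conv_lhs => rw [← Real.exp_log (hI_pos 0 self_mem_Ici)]
    rw [← Real.exp_add, Real.exp_le_exp]
    linarith
  refine ⟨hmain, fun hall => ?_⟩
  obtain ⟨lam, -, hlam⟩ := hmain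
  obtain ⟨k, hk⟩ := exists_nat_ge lam
  have hpos : 0 < I 0 * Real.exp (-lam) := mul_pos (hI_pos 0 self_mem_Ici) (Real.exp_pos _)
  refine hpos.not_ge (ge_of_tendsto (hall k) ?_)
  filter_upwards [eventually_ge_atTop (0 : ℝ)] with t ht
  have h1 := mul_le_mul_of_nonneg_left (hlam t ht) (Real.exp_pos (k * t)).le
  refine le_trans ?_ h1
  rw [mul_left_comm, ← Real.exp_add]
  refine mul_le_mul_of_nonneg_left (Real.exp_le_exp.2 ?_) (hI_pos 0 self_mem_Ici).le
  linarith [mul_le_mul_of_nonneg_right hk ht]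
end
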